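/- Let λ, σ, τ > 0 be real, p, q complex with Re(p) ≥ 0, Re(q) ≥ 0, and η₁, η₂ complex with Re(η₁) > 0, Re(η₂) > 0. Then the extended beta function satisfies the functional relation B_{p,q}^{λ;σ,τ}(η₁+1, η₂) + B_{p,q}^{λ;σ,τ}(η₁, η₂+1) = B_{p,q}^{λ;σ,τ}(η₁, η₂). -/

import Mathlib

open MeasureTheory Set Complex

/-- The classical Mittag-Leffler function `E_λ(x) = Σ xⁿ / Γ(λn+1)`. -/
noncomputable def mlE (lam : ℝ) (x : ℂ) : ℂ :=
  ∑' n : ℕ, x ^ n / Complex.Gamma (lam * n + 1)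

/-- The extended beta function
`B_{p,q}^{λ;σ,τ}(η₁,η₂) = ∫₀¹ t^{η₁-1}(1-t)^{η₂-1} E_λ(-p/t^σ) E_λ(-q/(1-t)^τ) dt`. -/
noncomputable def extBeta (lam sig tau : ℝ) (p q e1 e2 : ℂ) : ℂ :=
  ∫ t in Ioo (0:ℝ) 1,
    (t : ℂ) ^ (e1 - 1) * (1 - (t : ℂ)) ^ (e2 - 1) *
      mlE lam (-p / (t : ℂ) ^ (sig : ℂ)) * mlE lam (-q / (1 - (t : ℂ)) ^ (tau : ℂ))

/-! `t + (1 - t) = 1` adds up the two integrands on the left, so the only issue is convergence.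

If the Laplace integral of `u ↦ E_λ(c u^λ)` converges for `Re s > 0`, then the Laplace transform of
`E_λ(c u^λ) - 1` is `c / (s (s^λ - c))`, termwise for large real `s` and by the identity theorem
elsewhere. Hence `s^λ = c` has no root with `Re s > 0`, the only singularities on the closed half
plane are simple poles on the imaginary axis, and Fourier inversion on the line `Re s = 1 / u` gives
`E_λ(c u^λ) = O(u^ε)` for every `ε > 0`. So either both Mittag-Leffler factors are harmless at the
endpoints, or one of them is not integrable there against any power. In the second case none of the
three integrals converges absolutely, as a zero of the other factor at that endpoint has finite
order, and all of them are `0` by the convention for the Bochner integral. -/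

open Filter Asymptotics Topology FourierTransform

section MittagLeffler

theorem rpow_mul_exp_neg_le_Gamma {R x : ℝ} (hR : 0 ≤ R) (hx : 0 ≤ x) :
    R ^ x * Real.exp (-R) ≤ Real.Gamma (x + 1) := by
  have hint : IntegrableOn (fun u ↦ Real.exp (-u) * u ^ x) (Ioi 0) := by
    simpa using Real.GammaIntegral_convergent (show 0 < x + 1 by linarith)
  calc R ^ x * Real.exp (-R) = ∫ u in Ioi R, Real.exp (-u) * R ^ x := by
        rw [integral_mul_const, integral_exp_neg_Ioi, mul_comm]
    _ ≤ ∫ u in Ioi R, Real.exp (-u) * u ^ x := by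
        refine setIntegral_mono_on ((integrableOn_exp_neg_Ioi R).mul_const _)
          (hint.mono_set (Ioi_subset_Ioi hR)) measurableSet_Ioi fun u hu ↦ ?_
        gcongr
        exact hu.le
    _ ≤ ∫ u in Ioi 0, Real.exp (-u) * u ^ x := by
        refine setIntegral_mono_set hint ?_ (Ioi_subset_Ioi hR).eventuallyLE
        filter_upwards [ae_restrict_mem measurableSet_Ioi] with u (hu : 0 < u)
        positivity
    _ = Real.Gamma (x + 1) := by
        simp [Real.Gamma_eq_integral (show 0 < x + 1 by linarith)]

variable {lam : ℝ}

theorem summable_pow_div_Gamma (hlam : 0 < lam) {r : ℝ} (hr : 0 ≤ r) :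
    Summable fun n : ℕ ↦ r ^ n / Real.Gamma (lam * n + 1) := by
  set R : ℝ := (2 * r + 1) ^ (1 / lam)
  have hR_rpow : R ^ lam = 2 * r + 1 := by
    rw [← Real.rpow_mul (by positivity), one_div_mul_cancel hlam.ne', Real.rpow_one]
  have hratio : r / (2 * r + 1) < 1 := (div_lt_one (by positivity)).2 (by linarith)
  refine ((summable_geometric_of_lt_one (by positivity) hratio).mul_left
    (Real.exp R)).of_nonneg_of_le (fun n ↦ by positivity) fun n ↦ ?_
  have hGamma : (2 * r + 1) ^ n * Real.exp (-R) ≤ Real.Gamma (lam * n + 1) := by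
    simpa [Real.rpow_mul (show 0 ≤ R by positivity), hR_rpow] using
      rpow_mul_exp_neg_le_Gamma (R := R) (x := lam * n) (by positivity) (by positivity)
  rw [div_le_iff₀ (by positivity)]
  calc r ^ n = Real.exp R * (r / (2 * r + 1)) ^ n * ((2 * r + 1) ^ n * Real.exp (-R)) := by
        rw [div_pow, Real.exp_neg]
        field_simp
    _ ≤ _ := by gcongr

theorem norm_pow_div_Gamma (hlam : 0 < lam) (x : ℂ) (n : ℕ) :
    ‖x ^ n / Complex.Gamma (lam * n + 1)‖ = ‖x‖ ^ n / Real.Gamma (lam * n + 1) := by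
  have hcast : (lam * n + 1 : ℂ) = (lam * n + 1 : ℝ) := by norm_cast
  rw [hcast, Complex.Gamma_ofReal, norm_div, norm_pow, norm_real,
    Real.norm_of_nonneg (Real.Gamma_pos_of_pos (by positivity)).le]

theorem differentiable_mlE (hlam : 0 < lam) : Differentiable ℂ (mlE lam) := by
  intro z
  have hball : DifferentiableOn ℂ (mlE lam) (Metric.ball 0 (‖z‖ + 1)) := by
    refine differentiableOn_tsum_of_summable_norm
      (summable_pow_div_Gamma hlam (r := ‖z‖ + 1) (by positivity)) (fun n ↦ by fun_prop)
      Metric.isOpen_ball fun n w hw ↦ ?_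
    rw [norm_pow_div_Gamma hlam]
    have hw : ‖w‖ ≤ ‖z‖ + 1 := (mem_ball_zero_iff.1 hw).le
    gcongr
  exact hball.differentiableAt (Metric.isOpen_ball.mem_nhds (by simp))

theorem mlE_zero (lam : ℝ) : mlE lam 0 = 1 := by
  rw [mlE, tsum_eq_single 0 fun n hn ↦ by simp [hn]]
  simp

end MittagLeffler

section LaplaceTransform

variable {E : Type*} [NormedAddCommGroup E] [NormedSpace ℂ E] {f : ℝ → E} {a s : ℂ}

/-- The integrand of the one-sided Laplace transform of `f` at `s`. -/
noncomputable def laplaceKernel (f : ℝ → E) (s : ℂ) (u : ℝ) : E :=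
  cexp (-(s * u)) • f u

/-- The one-sided Laplace transform `s ↦ ∫₀^∞ e^{-su} f(u) du`; it is `0` where the integral does
not converge absolutely, see `LaplaceConvergent`. -/
noncomputable def laplaceTransform (f : ℝ → E) (s : ℂ) : E :=
  ∫ u in Ioi 0, laplaceKernel f s u

/-- Absolute convergence of the Laplace integral of `f` at `s`. -/
def LaplaceConvergent (f : ℝ → E) (s : ℂ) : Prop :=
  IntegrableOn (laplaceKernel f s) (Ioi 0)

theorem norm_laplaceKernel (f : ℝ → E) (s : ℂ) (u : ℝ) :
    ‖laplaceKernel f s u‖ = Real.exp (-(s.re * u)) * ‖f u‖ := by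
  simp [laplaceKernel, norm_smul, Complex.norm_exp]

theorem laplaceKernel_eq_exp_smul (f : ℝ → E) (a s : ℂ) (u : ℝ) :
    laplaceKernel f s u = cexp (-((s - a) * u)) • laplaceKernel f a u := by
  rw [laplaceKernel, laplaceKernel, smul_smul, ← Complex.exp_add]
  ring_nf

theorem LaplaceConvergent.aestronglyMeasurable (h : LaplaceConvergent f a) (s : ℂ) :
    AEStronglyMeasurable (laplaceKernel f s) (volume.restrict (Ioi 0)) := by
  rw [funext (laplaceKernel_eq_exp_smul f a s)]
  exact (Continuous.aestronglyMeasurable (by fun_prop)).smul (Integrable.aestronglyMeasurable h)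

theorem LaplaceConvergent.mono (h : LaplaceConvergent f a) (has : a.re ≤ s.re) :
    LaplaceConvergent f s := by
  refine Integrable.mono h (h.aestronglyMeasurable s) ?_
  filter_upwards [ae_restrict_mem measurableSet_Ioi] with u (hu : 0 < u)
  simp only [norm_laplaceKernel]
  gcongr

theorem LaplaceConvergent.differentiableAt_laplaceTransform (h : LaplaceConvergent f a)
    (has : a.re < s.re) : DifferentiableAt ℂ (laplaceTransform f) s := by
  obtain ⟨b, hab, hbs⟩ := exists_between has
  have hmeas : AEStronglyMeasurable (fun u : ℝ ↦ (-u : ℂ) • laplaceKernel f s u)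
      (volume.restrict (Ioi 0)) :=
    (Continuous.aestronglyMeasurable (by fun_prop)).smul (h.aestronglyMeasurable s)
  have hderiv (z : ℂ) (u : ℝ) :
      HasDerivAt (fun z ↦ laplaceKernel f z u) ((-u : ℂ) • laplaceKernel f z u) z := by
    have hexp : HasDerivAt (fun z : ℂ ↦ cexp (-(z * u))) (cexp (-(z * u)) * -u) z := by
      simpa using ((hasDerivAt_id z).mul_const (u : ℂ)).neg.cexp
    simpa [laplaceKernel, smul_smul, mul_comm] using hexp.smul_const (f u)
  have hbound {z : ℂ} (hz : b < z.re) {u : ℝ} (hu : 0 < u) :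
      ‖(-u : ℂ) • laplaceKernel f z u‖ ≤ (b - a.re)⁻¹ * ‖laplaceKernel f a u‖ := by
    have hu_le : u ≤ (b - a.re)⁻¹ * Real.exp ((b - a.re) * u) := by
      rw [le_inv_mul_iff₀ (by linarith)]
      linarith [Real.add_one_le_exp ((b - a.re) * u)]
    have hz_le : Real.exp (-(z.re * u)) ≤ Real.exp (-(b * u)) := by gcongr
    rw [norm_smul, norm_neg, norm_real, Real.norm_of_nonneg hu.le, norm_laplaceKernel,
      norm_laplaceKernel, ← mul_assoc, ← mul_assoc]
    refine mul_le_mul_of_nonneg_right ?_ (norm_nonneg _)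
    calc u * Real.exp (-(z.re * u))
        ≤ (b - a.re)⁻¹ * Real.exp ((b - a.re) * u) * Real.exp (-(b * u)) := by gcongr
      _ = (b - a.re)⁻¹ * Real.exp (-(a.re * u)) := by
        rw [mul_assoc, ← Real.exp_add]
        ring_nf
  exact (hasDerivAt_integral_of_dominated_loc_of_deriv_le
    ((isOpen_lt continuous_const Complex.continuous_re).mem_nhds hbs)
    (.of_forall h.aestronglyMeasurable) (h.mono has.le) hmeas
    (by filter_upwards [ae_restrict_mem measurableSet_Ioi] with u hu z hz using hbound hz hu)
    (Integrable.const_mul (Integrable.norm h) _)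
    (.of_forall fun u z _ ↦ hderiv z u)).2.differentiableAt

theorem LaplaceConvergent.sub {g : ℝ → E} (hf : LaplaceConvergent f s)
    (hg : LaplaceConvergent g s) : LaplaceConvergent (fun u ↦ f u - g u) s := by
  refine (Integrable.sub hf hg).congr (.of_forall fun u ↦ ?_)
  simp only [Pi.sub_apply, laplaceKernel, smul_sub]

theorem laplaceTransform_sub {g : ℝ → E} (hf : LaplaceConvergent f s)
    (hg : LaplaceConvergent g s) :
    laplaceTransform (fun u ↦ f u - g u) s = laplaceTransform f s - laplaceTransform g s := by
  rw [laplaceTransform, laplaceTransform, laplaceTransform, ← integral_sub hf hg]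
  simp only [laplaceKernel, smul_sub]

theorem laplaceConvergent_one (hs : 0 < s.re) : LaplaceConvergent (fun _ ↦ (1 : ℂ)) s := by
  refine (integrableOn_exp_mul_complex_Ioi (a := -s) (by simpa using hs) 0).congr_fun
    (fun u _ ↦ ?_) measurableSet_Ioi
  simp [laplaceKernel]

theorem laplaceTransform_one (hs : 0 < s.re) :
    laplaceTransform (fun _ ↦ (1 : ℂ)) s = s⁻¹ := by
  simpa [laplaceTransform, laplaceKernel] using
    integral_exp_mul_complex_Ioi (a := -s) (by simpa using hs) 0

theorem fourier_indicator_laplaceKernel (f : ℝ → E) (s : ℂ) (ξ : ℝ) :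
    𝓕 ((Ioi 0).indicator (laplaceKernel f s)) ξ =
      laplaceTransform f (s + (2 * Real.pi * ξ : ℝ) * I) := by
  rw [Real.fourier_real_eq_integral_exp_smul, laplaceTransform,
    ← integral_indicator measurableSet_Ioi]
  congr 1 with u
  by_cases hu : u ∈ Ioi (0 : ℝ)
  · rw [indicator_of_mem hu, indicator_of_mem hu,
      laplaceKernel_eq_exp_smul f s (s + _)]
    congr 2
    push_cast
    ring
  · simp only [indicator_of_notMem hu, smul_zero]

theorem LaplaceConvergent.exp_mul_norm_le [CompleteSpace E] {u : ℝ} (h : LaplaceConvergent f s)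
    (hint : Integrable fun y : ℝ ↦ laplaceTransform f (s + y * I)) (hu : 0 < u)
    (hf : ContinuousAt f u) :
    Real.exp (-(s.re * u)) * ‖f u‖ ≤
      (2 * Real.pi)⁻¹ * ∫ y : ℝ, ‖laplaceTransform f (s + y * I)‖ := by
  set k := (Ioi 0).indicator (laplaceKernel f s)
  have hk_eq : k =ᶠ[𝓝 u] laplaceKernel f s := eqOn_indicator.eventuallyEq_of_mem (Ioi_mem_nhds hu)
  have hk_cont : ContinuousAt k u := by
    refine ContinuousAt.congr ?_ hk_eq.symm
    unfold laplaceKernel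
    fun_prop
  have hk_fourier : 𝓕 k =
      fun ξ ↦ laplaceTransform f (s + (2 * Real.pi * ξ : ℝ) * I) :=
    funext (fourier_indicator_laplaceKernel f s)
  have hk_fourier_int : Integrable (𝓕 k) := by
    simpa only [hk_fourier] using hint.comp_mul_left' (by positivity : 2 * Real.pi ≠ 0)
  have hinv : 𝓕⁻ (𝓕 k) u = k u := (h.integrable_indicator measurableSet_Ioi).fourierInv_fourier_eq
    hk_fourier_int hk_cont
  calc Real.exp (-(s.re * u)) * ‖f u‖ = ‖𝓕⁻ (𝓕 k) u‖ := by
        rw [hinv, hk_eq.eq_of_nhds, norm_laplaceKernel]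
    _ ≤ ∫ ξ, ‖𝓕 k ξ‖ := by
        rw [Real.fourierInv_eq']
        refine (norm_integral_le_integral_norm _).trans_eq ?_
        simp only [norm_smul, Complex.norm_exp_ofReal_mul_I, one_mul]
    _ = _ := by
        rw [hk_fourier, Measure.integral_comp_mul_left
          (fun y : ℝ ↦ ‖laplaceTransform f (s + y * I)‖), abs_of_pos (by positivity), smul_eq_mul]

end LaplaceTransform

section LaplaceRpow

variable {r x : ℝ}

theorem laplaceKernel_rpow (r x u : ℝ) :
    laplaceKernel (fun u ↦ ((u ^ r : ℝ) : ℂ)) x u = (u ^ r * Real.exp (-(x * u)) : ℝ) := by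
  rw [laplaceKernel, smul_eq_mul]
  push_cast
  ring

theorem laplaceConvergent_rpow (hr : -1 < r) (hx : 0 < x) :
    LaplaceConvergent (fun u ↦ ((u ^ r : ℝ) : ℂ)) x := by
  rw [LaplaceConvergent, funext (laplaceKernel_rpow r x)]
  have hreal : IntegrableOn (fun u ↦ u ^ r * Real.exp (-(x * u))) (Ioi 0) := by
    simpa using integrableOn_rpow_mul_exp_neg_mul_rpow hr one_pos hx
  exact hreal.ofReal

theorem integral_norm_laplaceKernel_rpow (hr : -1 < r) (hx : 0 < x) :
    ∫ u in Ioi 0, ‖laplaceKernel (fun u ↦ ((u ^ r : ℝ) : ℂ)) x u‖ =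
      Real.Gamma (r + 1) / x ^ (r + 1) := by
  rw [div_eq_inv_mul, ← Real.inv_rpow hx.le, ← one_div,
    ← Real.integral_rpow_mul_exp_neg_mul_Ioi (by linarith) hx, add_sub_cancel_right]
  refine setIntegral_congr_fun measurableSet_Ioi fun u (hu : 0 < u) ↦ ?_
  rw [laplaceKernel_rpow, norm_real, Real.norm_of_nonneg (by positivity)]

theorem laplaceTransform_rpow (hr : -1 < r) (hx : 0 < x) :
    laplaceTransform (fun u ↦ ((u ^ r : ℝ) : ℂ)) x = (Real.Gamma (r + 1) / x ^ (r + 1) : ℝ) := by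
  rw [← integral_norm_laplaceKernel_rpow hr hx, ← integral_complex_ofReal, laplaceTransform]
  refine setIntegral_congr_fun measurableSet_Ioi fun u (hu : 0 < u) ↦ ?_
  rw [laplaceKernel_rpow, norm_real, Real.norm_of_nonneg (by positivity)]

end LaplaceRpow

section Relaxation

variable {lam : ℝ} {c s : ℂ}

/-- The fractional relaxation function `u ↦ E_λ(c u^λ)`, whose Laplace transform is algebraic in
`s ^ λ`. -/
noncomputable def mlRelaxation (lam : ℝ) (c : ℂ) (u : ℝ) : ℂ :=
  mlE lam (c * (u ^ lam : ℝ))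

theorem continuous_mlRelaxation (hlam : 0 < lam) (c : ℂ) : Continuous (mlRelaxation lam c) :=
  (differentiable_mlE hlam).continuous.comp <|
    continuous_const.mul (continuous_ofReal.comp (Real.continuous_rpow_const hlam.le))

theorem mlRelaxation_eq_tsum {u : ℝ} (lam : ℝ) (c : ℂ) (hu : 0 ≤ u) :
    mlRelaxation lam c u =
      ∑' n : ℕ, c ^ n / Complex.Gamma (lam * n + 1) * (u ^ (lam * n) : ℝ) := by
  refine tsum_congr fun n ↦ ?_
  rw [Real.rpow_mul hu, Real.rpow_natCast, mul_pow, ofReal_pow]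
  ring

theorem hasSum_laplaceTransform_mlRelaxation {x : ℝ} (hlam : 0 < lam) (hx : 0 < x)
    (hc : ‖c‖ < x ^ lam) :
    HasSum (fun n : ℕ ↦ (x : ℂ)⁻¹ * (c / (x : ℂ) ^ (lam : ℂ)) ^ n)
      (laplaceTransform (mlRelaxation lam c) x) := by
  set F : ℕ → ℝ → ℂ := fun n u ↦ c ^ n / Complex.Gamma (lam * n + 1) *
    laplaceKernel (fun u ↦ ((u ^ (lam * n) : ℝ) : ℂ)) x u
  have hexp (n : ℕ) : -1 < lam * n := by linarith [show 0 ≤ lam * n by positivity]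
  have hpow (n : ℕ) : x ^ (lam * n + 1) = (x ^ lam) ^ n * x := by
    rw [Real.rpow_add hx, Real.rpow_one, Real.rpow_mul hx.le, Real.rpow_natCast]
  have hGamma (n : ℕ) : 0 < Real.Gamma (lam * n + 1) := Real.Gamma_pos_of_pos (by positivity)
  have hF_integral (n : ℕ) :
      ∫ u in Ioi 0, F n u = (x : ℂ)⁻¹ * (c / (x : ℂ) ^ (lam : ℂ)) ^ n := by
    have hGamma' : Complex.Gamma (lam * n + 1) ≠ 0 := by
      refine Complex.Gamma_ne_zero_of_re_pos ?_
      norm_cast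
      positivity
    rw [integral_const_mul, ← laplaceTransform, laplaceTransform_rpow (hexp n) hx, hpow n]
    push_cast [← Complex.Gamma_ofReal, Complex.ofReal_cpow hx.le]
    rw [div_pow]
    field_simp
  have hF_norm (n : ℕ) : ∫ u in Ioi 0, ‖F n u‖ = x⁻¹ * (‖c‖ / x ^ lam) ^ n := by
    simp only [F, norm_mul, norm_pow_div_Gamma hlam]
    rw [integral_const_mul, integral_norm_laplaceKernel_rpow (hexp n) hx, hpow n,
      div_pow]
    field_simp [(hGamma n).ne']
  have hF_sum (u : ℝ) (hu : u ∈ Ioi 0) : ∑' n, F n u = laplaceKernel (mlRelaxation lam c) x u := by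
    rw [laplaceKernel, mlRelaxation_eq_tsum lam c (le_of_lt hu), smul_eq_mul, ← tsum_mul_left]
    exact tsum_congr fun n ↦ mul_left_comm _ _ _
  have hsummable : Summable fun n ↦ ∫ u in Ioi 0, ‖F n u‖ := by
    simp only [hF_norm]
    exact (summable_geometric_of_lt_one (by positivity)
      ((div_lt_one (by positivity)).2 hc)).mul_left _
  rw [laplaceTransform, ← setIntegral_congr_fun measurableSet_Ioi hF_sum]
  simp only [← hF_integral]
  exact hasSum_integral_of_summable_integral_norm
    (fun n ↦ (laplaceConvergent_rpow (hexp n) hx).const_mul _) hsummable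

theorem mul_laplaceTransform_mlRelaxation_ofReal {x : ℝ} (hlam : 0 < lam) (hx : 0 < x)
    (hc : ‖c‖ < x ^ lam) :
    x * ((x : ℂ) ^ (lam : ℂ) - c) * laplaceTransform (mlRelaxation lam c) x =
      (x : ℂ) ^ (lam : ℂ) := by
  have hx_ne : (x : ℂ) ≠ 0 := ofReal_ne_zero.2 hx.ne'
  have hnorm : ‖(x : ℂ) ^ (lam : ℂ)‖ = x ^ lam := by
    rw [norm_cpow_eq_rpow_re_of_pos hx, ofReal_re]
  have hpow_ne : (x : ℂ) ^ (lam : ℂ) ≠ 0 := norm_pos_iff.1 (hnorm ▸ by positivity)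
  have hratio : ‖c / (x : ℂ) ^ (lam : ℂ)‖ < 1 := by
    rw [norm_div, hnorm]
    exact (div_lt_one (by positivity)).2 hc
  have hsub_ne : (x : ℂ) ^ (lam : ℂ) - c ≠ 0 := by
    refine sub_ne_zero.2 fun h ↦ ?_
    rw [← h, hnorm] at hc
    exact hc.false
  rw [(hasSum_laplaceTransform_mlRelaxation hlam hx hc).unique
    ((hasSum_geometric_of_norm_lt_one hratio).mul_left _),
    one_sub_div hpow_ne]
  field_simp

theorem mul_laplaceTransform_mlRelaxation (hlam : 0 < lam)
    (h : ∀ s, 0 < s.re → LaplaceConvergent (mlRelaxation lam c) s) (hs : 0 < s.re) :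
    s * (s ^ (lam : ℂ) - c) * laplaceTransform (mlRelaxation lam c) s = s ^ (lam : ℂ) := by
  have hopen : IsOpen {s : ℂ | 0 < s.re} := isOpen_lt continuous_const continuous_re
  have hpow : DifferentiableOn ℂ (fun s : ℂ ↦ s ^ (lam : ℂ)) {s | 0 < s.re} := fun s hs ↦
    (differentiableAt_id.cpow_const (Or.inl hs)).differentiableWithinAt
  have hlaplace : DifferentiableOn ℂ (laplaceTransform (mlRelaxation lam c)) {s | 0 < s.re} := by
    intro s hs
    obtain ⟨δ, hδ, hδs⟩ := exists_between (show 0 < s.re from hs)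
    exact ((h δ hδ).differentiableAt_laplaceTransform hδs).differentiableWithinAt
  obtain ⟨x₀, hx₀, hx₀_large⟩ := ((eventually_gt_atTop 0).and
    ((tendsto_rpow_atTop hlam).eventually_gt_atTop ‖c‖)).exists
  refine (((differentiableOn_id.mul (hpow.sub_const c)).mul hlaplace).analyticOnNhd
    hopen).eqOn_of_preconnected_of_frequently_eq (𝕜 := ℂ) (hpow.analyticOnNhd hopen)
    (convex_halfSpace_re_gt 0).isPreconnected (z₀ := (x₀ : ℂ)) hx₀ ?_ hs
  have hreal : Tendsto ((↑) : ℝ → ℂ) (𝓝[>] x₀) (𝓝[≠] (x₀ : ℂ)) :=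
    tendsto_nhdsWithin_iff.2 ⟨continuous_ofReal.continuousWithinAt, by
      filter_upwards [self_mem_nhdsWithin] with x hx
      exact ofReal_injective.ne hx.ne'⟩
  refine hreal.frequently (Eventually.frequently ?_)
  filter_upwards [self_mem_nhdsWithin] with x (hx : x₀ < x)
  exact mul_laplaceTransform_mlRelaxation_ofReal hlam (hx₀.trans hx)
    (hx₀_large.trans (Real.rpow_lt_rpow hx₀.le hx hlam))

theorem cpow_ne_of_laplaceConvergent_mlRelaxation (hlam : 0 < lam)
    (h : ∀ s, 0 < s.re → LaplaceConvergent (mlRelaxation lam c) s) (hs : 0 < s.re) :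
    s ^ (lam : ℂ) ≠ c := by
  rintro rfl
  have hzero := mul_laplaceTransform_mlRelaxation hlam h hs
  rw [sub_self, mul_zero, zero_mul, eq_comm, cpow_eq_zero_iff] at hzero
  simp [hzero.1] at hs

/-- The Laplace transform `c / (s (s^λ - c))` of `u ↦ E_λ(c u^λ) - 1`. -/
noncomputable def mlSymbol (lam : ℝ) (c s : ℂ) : ℂ :=
  c / (s * (s ^ (lam : ℂ) - c))

theorem laplaceConvergent_mlRelaxation_sub_one (hs : 0 < s.re)
    (h : LaplaceConvergent (mlRelaxation lam c) s) :
    LaplaceConvergent (fun u ↦ mlRelaxation lam c u - 1) s :=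
  h.sub (laplaceConvergent_one hs)

theorem laplaceTransform_mlRelaxation_sub_one (hlam : 0 < lam)
    (h : ∀ s, 0 < s.re → LaplaceConvergent (mlRelaxation lam c) s) (hs : 0 < s.re) :
    laplaceTransform (fun u ↦ mlRelaxation lam c u - 1) s = mlSymbol lam c s := by
  have hs_ne : s ≠ 0 := by
    rintro rfl
    simp at hs
  have hsub_ne : s ^ (lam : ℂ) - c ≠ 0 :=
    sub_ne_zero.2 (cpow_ne_of_laplaceConvergent_mlRelaxation hlam h hs)
  have hlaplace := mul_laplaceTransform_mlRelaxation hlam h hs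
  rw [laplaceTransform_sub (h s hs) (laplaceConvergent_one hs), laplaceTransform_one hs, mlSymbol,
    eq_div_iff (mul_ne_zero hs_ne hsub_ne)]
  field_simp
  linear_combination hlaplace

end Relaxation

section SymbolBound

theorem integrable_comp_abs {f : ℝ → ℝ} (hf : IntegrableOn f (Ioi 0)) :
    Integrable fun x ↦ f |x| := by
  have hpos : IntegrableOn (fun x ↦ f |x|) (Ioi 0) :=
    hf.congr_fun (fun x (hx : 0 < x) ↦ by rw [abs_of_pos hx]) measurableSet_Ioi
  have hneg : IntegrableOn (fun x ↦ f |x|) (Iio 0) := by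
    rw [← neg_zero] at hpos
    simpa only [abs_neg] using hpos.comp_neg_Iio
  rw [← integrableOn_univ, ← Iio_union_Ici (a := (0 : ℝ))]
  exact hneg.union ((integrableOn_Ici_iff_integrableOn_Ioi).2 hpos)

theorem integrable_abs_rpow_mul_one_add_abs_rpow {a b : ℝ} (ha : -1 < a) (hb : b ≤ 0)
    (hab : a + b < -1) : Integrable fun y : ℝ ↦ |y| ^ a * (1 + |y|) ^ b := by
  refine integrable_comp_abs (f := fun y ↦ y ^ a * (1 + y) ^ b) ?_
  have hmeas : Measurable fun y : ℝ ↦ y ^ a * (1 + y) ^ b := by fun_prop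
  rw [← Ioc_union_Ioi_eq_Ioi zero_le_one]
  refine IntegrableOn.union ?_ ?_
  · have hint : IntegrableOn (fun y : ℝ ↦ y ^ a) (Ioc 0 1) :=
      (intervalIntegrable_iff_integrableOn_Ioc_of_le zero_le_one).1
        (intervalIntegral.intervalIntegrable_rpow' ha)
    refine hint.mono' hmeas.aestronglyMeasurable ?_
    filter_upwards [ae_restrict_mem measurableSet_Ioc] with y hy
    have hy0 : 0 < y := hy.1
    rw [Real.norm_of_nonneg (by positivity)]
    exact mul_le_of_le_one_right (by positivity)
      (Real.rpow_le_one_of_one_le_of_nonpos (by linarith) hb)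
  · refine (integrableOn_Ioi_rpow_of_lt hab one_pos).mono' hmeas.aestronglyMeasurable ?_
    filter_upwards [ae_restrict_mem measurableSet_Ioi] with y (hy : 1 < y)
    have hy0 : 0 < y := by linarith
    rw [Real.norm_of_nonneg (by positivity), Real.rpow_add hy0]
    exact mul_le_mul_of_nonneg_left (Real.rpow_le_rpow_of_nonpos hy0 (by linarith) hb)
      (by positivity)

theorem isBigO_principal_of_isBigO_nhdsWithin {X E F : Type*} [TopologicalSpace X] [Norm E]
    [SeminormedAddCommGroup F] {f : X → E} {g : X → F} {S : Set X}
    (hlocal : ∀ x ∈ closure S, f =O[𝓝[S] x] g) (hinfty : f =O[cocompact X ⊓ 𝓟 S] g) :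
    f =O[𝓟 S] g := by
  obtain ⟨C, hC⟩ := hinfty.bound
  obtain ⟨K, hK, hKC⟩ := mem_cocompact.1 (eventually_inf_principal.1 hC)
  have hcompact : f =O[𝓟 (K ∩ S)] g := by
    refine hK.induction_on (p := fun t ↦ f =O[𝓟 (t ∩ S)] g) ?_ ?_ ?_ ?_
    · simp only [empty_inter, principal_empty, isBigO_bot]
    · exact fun s t hst ht ↦ ht.mono (principal_mono.2 (inter_subset_inter_left S hst))
    · intro s t hs ht
      rw [union_inter_distrib_right, ← sup_principal]
      exact hs.sup ht
    · intro x _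
      by_cases hx : x ∈ closure S
      · obtain ⟨c, hc⟩ := (hlocal x hx).bound
        exact ⟨_, mem_nhdsWithin_of_mem_nhds (eventually_nhdsWithin_iff.1 hc),
          .of_bound c fun y hy ↦ hy.1 hy.2⟩
      · refine ⟨(closure S)ᶜ, mem_nhdsWithin_of_mem_nhds (isClosed_closure.compl_mem_nhds hx), ?_⟩
        simp only [(disjoint_compl_left.mono_right subset_closure).inter_eq, principal_empty,
          isBigO_bot]
  have hrest : f =O[𝓟 (S \ K)] g := .of_bound C fun y hy ↦ hKC hy.2 hy.1
  refine (hcompact.sup hrest).mono ?_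
  rw [sup_principal, inter_comm, inter_union_sdiff]

/-- A model singularity: a simple pole at `0`, with the decay `‖s‖ ^ (-1 - λ)` at infinity. -/
noncomputable def poleWeight (lam : ℝ) (s : ℂ) : ℝ :=
  ‖s‖⁻¹ * (1 + ‖s‖) ^ (-lam)

/-- The sum of the model singularities `poleWeight` placed at the points `iρ`, `ρ ∈ P`, of the
imaginary axis. -/
noncomputable def polesWeight (lam : ℝ) (P : Finset ℝ) (s : ℂ) : ℝ :=
  ∑ ρ ∈ P, poleWeight lam (s - ρ * I)

variable {lam : ℝ} {P : Finset ℝ} {c s : ℂ}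

theorem poleWeight_nonneg (lam : ℝ) (s : ℂ) : 0 ≤ poleWeight lam s := by
  unfold poleWeight
  positivity

theorem polesWeight_nonneg (lam : ℝ) (P : Finset ℝ) (s : ℂ) : 0 ≤ polesWeight lam P s :=
  Finset.sum_nonneg fun _ _ ↦ poleWeight_nonneg _ _

theorem poleWeight_le_polesWeight {ρ : ℝ} (lam : ℝ) (hρ : ρ ∈ P) (s : ℂ) :
    ‖poleWeight lam (s - ρ * I)‖ ≤ ‖polesWeight lam P s‖ := by
  rw [Real.norm_of_nonneg (poleWeight_nonneg _ _),
    Real.norm_of_nonneg (polesWeight_nonneg lam P s)]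
  exact Finset.single_le_sum (f := fun ρ : ℝ ↦ poleWeight lam (s - ρ * I))
    (fun _ _ ↦ poleWeight_nonneg _ _) hρ

theorem inv_isBigO_polesWeight {ρ : ℝ} (lam : ℝ) (hρ : ρ ∈ P) (s₀ : ℂ) :
    (fun s ↦ (s - ρ * I)⁻¹) =O[𝓝 s₀] polesWeight lam P := by
  have hbounded : (fun s : ℂ ↦ (1 + ‖s - ρ * I‖) ^ lam) =O[𝓝 s₀] fun _ ↦ (1 : ℝ) :=
    Tendsto.isBigO_one ℝ
      (ContinuousAt.rpow_const (by fun_prop) (Or.inl (by positivity))).tendsto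
  calc (fun s ↦ (s - ρ * I)⁻¹)
      =O[𝓝 s₀] fun s ↦ poleWeight lam (s - ρ * I) * (1 + ‖s - ρ * I‖) ^ lam := by
        refine isBigO_of_le _ fun s ↦ le_of_eq ?_
        rw [poleWeight, mul_assoc, ← Real.rpow_add (by positivity), neg_add_cancel, Real.rpow_zero,
          mul_one, norm_inv, norm_inv, norm_norm]
    _ =O[𝓝 s₀] fun s ↦ poleWeight lam (s - ρ * I) := by
        simpa only [mul_one] using (isBigO_refl _ _).mul hbounded
    _ =O[𝓝 s₀] polesWeight lam P := isBigO_of_le _ (poleWeight_le_polesWeight lam hρ)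

theorem mlSymbol_isBigO_nhds_of_ne (hlam : 0 < lam) (hP : 0 ∈ P) (hs : 0 ≤ s.re)
    (hsc : s ^ (lam : ℂ) ≠ c) : mlSymbol lam c =O[𝓝 s] polesWeight lam P := by
  have hcont : ContinuousAt (fun s : ℂ ↦ c / (s ^ (lam : ℂ) - c)) s :=
    continuousAt_const.div ((continuousAt_cpow_const_of_re_pos (Or.inl hs) (by simpa)).sub
      continuousAt_const) (sub_ne_zero.2 hsc)
  have hinv : (fun s : ℂ ↦ s⁻¹) =O[𝓝 s] polesWeight lam P := by
    simpa using inv_isBigO_polesWeight lam hP s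
  refine ((hcont.tendsto.isBigO_one ℝ).mul hinv).congr (fun s ↦ ?_) (fun s ↦ one_mul _)
  rw [mlSymbol, div_mul_eq_div_div_swap, div_eq_mul_inv _ s]

theorem mlSymbol_isBigO_nhds_of_eq {ρ : ℝ} (hlam : 0 < lam) (hρ : ρ ∈ P) (hρ_ne : ρ ≠ 0)
    (hρc : (ρ * I : ℂ) ^ (lam : ℂ) = c) : mlSymbol lam c =O[𝓝 (ρ * I)] polesWeight lam P := by
  have hne : (ρ * I : ℂ) ≠ 0 := mul_ne_zero (ofReal_ne_zero.2 hρ_ne) I_ne_zero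
  have hderiv : HasDerivAt (fun s : ℂ ↦ s ^ (lam : ℂ))
      (lam * (ρ * I : ℂ) ^ ((lam : ℂ) - 1)) (ρ * I) := by
    simpa using (hasDerivAt_id (ρ * I : ℂ)).cpow_const (c := (lam : ℂ)) (Or.inr (by simpa))
  have hderiv_ne : lam * (ρ * I : ℂ) ^ ((lam : ℂ) - 1) ≠ 0 :=
    mul_ne_zero (ofReal_ne_zero.2 hlam.ne') (by simp [cpow_eq_zero_iff, hne])
  have hsimple : (fun s ↦ s - ρ * I) =O[𝓝 (ρ * I)] fun s : ℂ ↦ s ^ (lam : ℂ) - c := by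
    simpa only [hρc, Function.comp_def, id_eq] using
      (hderiv.isTheta_sub hderiv_ne).isBigO_symm.comp_tendsto
        (tendsto_id.prodMk tendsto_const_pure)
  have hinv : (fun s : ℂ ↦ (s ^ (lam : ℂ) - c)⁻¹) =O[𝓝 (ρ * I)] polesWeight lam P :=
    (hsimple.inv_rev (.of_forall fun s hs ↦ by rw [sub_eq_zero.1 hs, hρc, sub_self])).trans
      (inv_isBigO_polesWeight lam hρ _)
  have hcont : ContinuousAt (fun s : ℂ ↦ c / s) (ρ * I) :=
    continuousAt_const.div continuousAt_id hne
  refine ((hcont.tendsto.isBigO_one ℝ).mul hinv).congr (fun s ↦ ?_) (fun s ↦ one_mul _)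
  rw [mlSymbol, div_mul_eq_div_div, div_eq_mul_inv (c / s)]

theorem mlSymbol_isBigO_cocompact (hlam : 0 < lam) (hP : 0 ∈ P) (c : ℂ) :
    mlSymbol lam c =O[cocompact ℂ] polesWeight lam P := by
  have hnorm : Tendsto (fun s : ℂ ↦ ‖s‖) (cocompact ℂ) atTop := tendsto_norm_cocompact_atTop
  have hc : (fun _ : ℂ ↦ c) =o[cocompact ℂ] fun s : ℂ ↦ s ^ (lam : ℂ) := by
    refine isLittleO_const_left.2 (Or.inr ?_)
    simpa only [Function.comp_def, norm_cpow_real] using (tendsto_rpow_atTop hlam).comp hnorm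
  have hrpow : (fun s : ℂ ↦ (1 + ‖s‖) ^ lam) =O[cocompact ℂ] fun s : ℂ ↦ s ^ (lam : ℂ) := by
    refine .of_bound (2 ^ lam) ?_
    filter_upwards [hnorm.eventually_ge_atTop 1] with s hs
    rw [Real.norm_of_nonneg (by positivity), norm_cpow_real,
      ← Real.mul_rpow zero_le_two (norm_nonneg s)]
    gcongr
    linarith
  have hsub : (fun s : ℂ ↦ (1 + ‖s‖) ^ lam) =O[cocompact ℂ] fun s : ℂ ↦ s ^ (lam : ℂ) - c :=
    hrpow.trans hc.right_isBigO_sub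
  have hinv : (fun s : ℂ ↦ (s ^ (lam : ℂ) - c)⁻¹) =O[cocompact ℂ] fun s ↦ ((1 + ‖s‖) ^ lam)⁻¹ :=
    hsub.inv_rev (.of_forall fun s hs ↦ absurd hs (by positivity))
  have hpole : mlSymbol lam c =O[cocompact ℂ] poleWeight lam := by
    have hs : (fun s : ℂ ↦ c * s⁻¹) =O[cocompact ℂ] fun s ↦ ‖s‖⁻¹ :=
      (isBigO_of_le _ fun s ↦ by simp).const_mul_left c
    refine (hs.mul hinv).congr (fun s ↦ ?_) (fun s ↦ ?_)
    · rw [mlSymbol, div_mul_eq_div_div, div_eq_mul_inv, div_eq_mul_inv]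
    · rw [poleWeight, Real.rpow_neg (by positivity)]
  refine hpole.trans (isBigO_of_le _ fun s ↦ ?_)
  simpa using poleWeight_le_polesWeight lam hP s

theorem mlSymbol_isBigO_rightHalfPlane (hlam : 0 < lam) (hc : c ≠ 0)
    (hne : ∀ s : ℂ, 0 < s.re → s ^ (lam : ℂ) ≠ c) :
    ∃ P : Finset ℝ, mlSymbol lam c =O[𝓟 {s | 0 < s.re}] polesWeight lam P := by
  set r : ℝ := ‖c‖ ^ lam⁻¹
  have hr : ∀ ρ : ℝ, (ρ * I : ℂ) ^ (lam : ℂ) = c → |ρ| = r := by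
    rintro ρ rfl
    simp [r, norm_cpow_real, Real.rpow_rpow_inv, hlam.ne']
  refine ⟨{0, r, -r}, isBigO_principal_of_isBigO_nhdsWithin (fun s hs ↦ ?_)
    ((mlSymbol_isBigO_cocompact hlam (by simp) c).mono inf_le_left)⟩
  rw [closure_setOfPred_lt_re, mem_ofPred_eq] at hs
  refine IsBigO.mono ?_ nhdsWithin_le_nhds
  by_cases hsc : s ^ (lam : ℂ) = c
  · have hs_eq : s = s.im * I := by
      refine Complex.ext ?_ (by simp)
      simpa using (hs.antisymm (not_lt.1 fun hs ↦ hne s hs hsc)).symm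
    rw [hs_eq] at hsc ⊢
    refine mlSymbol_isBigO_nhds_of_eq hlam ?_ ?_ hsc
    · rcases eq_or_eq_neg_of_abs_eq (hr _ hsc) with h | h <;> simp [h]
    · intro him
      rw [him, ofReal_zero, zero_mul, zero_cpow (ofReal_ne_zero.2 hlam.ne')] at hsc
      exact hc hsc.symm
  · exact mlSymbol_isBigO_nhds_of_ne hlam (by simp) hs hsc

theorem poleWeight_le {e x : ℝ} (he : 0 ≤ e) (he1 : e ≤ 1) (hlam : 0 ≤ lam) (hx : 0 < x) {y : ℝ}
    (hy : y ≠ 0) :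
    poleWeight lam (x + y * I) ≤ x ^ (-e) * (|y| ^ (e - 1) * (1 + |y|) ^ (-lam)) := by
  have hxs : x ≤ ‖(x + y * I : ℂ)‖ := by
    simpa [abs_of_pos hx] using Complex.abs_re_le_norm (x + y * I)
  have hys : |y| ≤ ‖(x + y * I : ℂ)‖ := by simpa using Complex.abs_im_le_norm (x + y * I)
  have hy_pos : 0 < |y| := abs_pos.2 hy
  have hs_pos : 0 < ‖(x + y * I : ℂ)‖ := hx.trans_le hxs
  calc poleWeight lam (x + y * I)
      = ‖(x + y * I : ℂ)‖ ^ (-e) * ‖(x + y * I : ℂ)‖ ^ (e - 1)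
          * (1 + ‖(x + y * I : ℂ)‖) ^ (-lam) := by
        rw [poleWeight, ← Real.rpow_add hs_pos, neg_add_eq_sub, sub_sub_cancel_left,
          Real.rpow_neg_one]
    _ ≤ x ^ (-e) * |y| ^ (e - 1) * (1 + |y|) ^ (-lam) := by
        gcongr ?_ * ?_ * ?_
        · exact Real.rpow_le_rpow_of_nonpos hx hxs (by linarith)
        · exact Real.rpow_le_rpow_of_nonpos hy_pos hys (by linarith)
        · exact Real.rpow_le_rpow_of_nonpos (by positivity) (by linarith) (by linarith)
    _ = x ^ (-e) * (|y| ^ (e - 1) * (1 + |y|) ^ (-lam)) := mul_assoc _ _ _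

theorem exists_integrable_polesWeight_le (P : Finset ℝ) {e : ℝ} (he : 0 < e) (he1 : e ≤ 1)
    (helam : e < lam) :
    ∃ g : ℝ → ℝ, Integrable g ∧ ∀ x : ℝ, 0 < x →
      ∀ᵐ y : ℝ, polesWeight lam P (x + y * I) ≤ x ^ (-e) * g y := by
  refine ⟨fun y ↦ ∑ ρ ∈ P, |y - ρ| ^ (e - 1) * (1 + |y - ρ|) ^ (-lam),
    integrable_finsetSum _ fun ρ _ ↦ (integrable_abs_rpow_mul_one_add_abs_rpow (by linarith)
      (by linarith) (by linarith)).comp_sub_right ρ, fun x hx ↦ ?_⟩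
  filter_upwards [P.finite_toSet.countable.ae_notMem volume] with y hy
  rw [polesWeight, Finset.mul_sum]
  refine Finset.sum_le_sum fun ρ hρ ↦ ?_
  have hyρ : y - ρ ≠ 0 := sub_ne_zero.2 fun h ↦ hy (h ▸ hρ)
  have hshift : (x + y * I - ρ * I : ℂ) = x + (y - ρ : ℝ) * I := by
    push_cast
    ring
  rw [hshift]
  exact poleWeight_le he.le he1 (he.trans helam).le hx hyρ

theorem exists_integral_norm_mlSymbol_le (hc : c ≠ 0)
    (hne : ∀ s : ℂ, 0 < s.re → s ^ (lam : ℂ) ≠ c) {e : ℝ} (he : 0 < e) (he1 : e ≤ 1)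
    (helam : e < lam) :
    ∃ C : ℝ, ∀ x : ℝ, 0 < x → Integrable (fun y : ℝ ↦ mlSymbol lam c (x + y * I)) ∧
      ∫ y : ℝ, ‖mlSymbol lam c (x + y * I)‖ ≤ C * x ^ (-e) := by
  obtain ⟨P, hP⟩ := mlSymbol_isBigO_rightHalfPlane (he.trans helam) hc hne
  obtain ⟨A, hA_pos, hA⟩ := hP.exists_pos
  obtain ⟨g, hg, hPg⟩ := exists_integrable_polesWeight_le P he he1 helam
  refine ⟨A * ∫ y, g y, fun x hx ↦ ?_⟩
  have hdom : Integrable fun y ↦ A * (x ^ (-e) * g y) := (hg.const_mul _).const_mul _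
  have hle : ∀ᵐ y : ℝ, ‖mlSymbol lam c (x + y * I)‖ ≤ A * (x ^ (-e) * g y) := by
    filter_upwards [hPg x hx] with y hy
    refine (isBigOWith_principal.1 hA _ (by simpa using hx)).trans ?_
    rw [Real.norm_of_nonneg (polesWeight_nonneg lam P _)]
    gcongr
  have hmeas : Measurable fun y : ℝ ↦ mlSymbol lam c (x + y * I) := by
    unfold mlSymbol
    fun_prop
  have hint : Integrable fun y : ℝ ↦ mlSymbol lam c (x + y * I) :=
    hdom.mono' hmeas.aestronglyMeasurable hle
  refine ⟨hint, ?_⟩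
  calc ∫ y : ℝ, ‖mlSymbol lam c (x + y * I)‖ ≤ ∫ y, A * (x ^ (-e) * g y) :=
        integral_mono_ae hint.norm hdom hle
    _ = A * (∫ y, g y) * x ^ (-e) := by
        rw [integral_const_mul, integral_const_mul]
        ring

end SymbolBound

section Growth

variable {lam : ℝ} {c : ℂ}

theorem exists_norm_mlRelaxation_sub_one_le (hlam : 0 < lam) (hc : c ≠ 0)
    (h : ∀ s : ℂ, 0 < s.re → LaplaceConvergent (mlRelaxation lam c) s) {e : ℝ} (he : 0 < e)
    (he1 : e ≤ 1) (helam : e < lam) :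
    ∃ C : ℝ, ∀ u : ℝ, 0 < u → ‖mlRelaxation lam c u - 1‖ ≤ C * u ^ e := by
  obtain ⟨C, hC⟩ := exists_integral_norm_mlSymbol_le hc
    (fun s ↦ cpow_ne_of_laplaceConvergent_mlRelaxation hlam h) he he1 helam
  refine ⟨Real.exp 1 * ((2 * Real.pi)⁻¹ * C), fun u hu ↦ ?_⟩
  obtain ⟨hint, hbound⟩ := hC u⁻¹ (inv_pos.2 hu)
  have hsymbol (y : ℝ) : laplaceTransform (fun u ↦ mlRelaxation lam c u - 1)
      ((u⁻¹ : ℝ) + y * I) = mlSymbol lam c ((u⁻¹ : ℝ) + y * I) :=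
    laplaceTransform_mlRelaxation_sub_one hlam h (by simpa using hu)
  have hinversion : Real.exp (-(u⁻¹ * u)) * ‖mlRelaxation lam c u - 1‖ ≤
      (2 * Real.pi)⁻¹ * ∫ y : ℝ, ‖mlSymbol lam c ((u⁻¹ : ℝ) + y * I)‖ := by
    have hconv : LaplaceConvergent (fun u ↦ mlRelaxation lam c u - 1) (u⁻¹ : ℝ) :=
      laplaceConvergent_mlRelaxation_sub_one (by simpa using hu) (h _ (by simpa using hu))
    simpa only [hsymbol, ofReal_re] using hconv.exp_mul_norm_le
      (by simpa only [hsymbol] using hint) hu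
      ((continuous_mlRelaxation hlam c).sub continuous_const).continuousAt
  rw [inv_mul_cancel₀ hu.ne', Real.exp_neg, inv_mul_le_iff₀ (Real.exp_pos 1)] at hinversion
  rw [Real.inv_rpow hu.le, Real.rpow_neg hu.le, inv_inv] at hbound
  calc ‖mlRelaxation lam c u - 1‖
      ≤ Real.exp 1 * ((2 * Real.pi)⁻¹ * ∫ y : ℝ, ‖mlSymbol lam c ((u⁻¹ : ℝ) + y * I)‖) := hinversion
    _ ≤ Real.exp 1 * ((2 * Real.pi)⁻¹ * (C * u ^ e)) := by gcongr
    _ = Real.exp 1 * ((2 * Real.pi)⁻¹ * C) * u ^ e := by ring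

theorem mlRelaxation_isBigO_rpow (hlam : 0 < lam)
    (h : ∀ s : ℂ, 0 < s.re → LaplaceConvergent (mlRelaxation lam c) s) {e : ℝ} (he : 0 < e) :
    mlRelaxation lam c =O[𝓟 (Ici 1)] fun u ↦ u ^ e := by
  have hone : (fun _ ↦ (1 : ℂ)) =O[𝓟 (Ici 1)] fun u : ℝ ↦ u ^ e := by
    refine .of_bound 1 (eventually_principal.2 fun u (hu : 1 ≤ u) ↦ ?_)
    rw [norm_one, one_mul, Real.norm_of_nonneg (by positivity)]
    exact Real.one_le_rpow hu he.le
  rcases eq_or_ne c 0 with rfl | hc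
  · have hconst : mlRelaxation lam 0 = fun _ ↦ 1 :=
      funext fun u ↦ by rw [mlRelaxation, zero_mul, mlE_zero]
    rwa [hconst]
  obtain ⟨d, hd, hdle⟩ : ∃ d, 0 < d ∧ d < min (min e 1) lam := exists_between (by positivity)
  obtain ⟨⟨hde, hd1⟩, hdlam⟩ := (lt_min_iff.1 hdle).imp_left lt_min_iff.1
  obtain ⟨C, hC⟩ := exists_norm_mlRelaxation_sub_one_le hlam hc h hd hd1.le hdlam
  have hsub : (fun u ↦ mlRelaxation lam c u - 1) =O[𝓟 (Ici 1)] fun u ↦ u ^ e := by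
    refine .of_bound |C| (eventually_principal.2 fun u (hu : 1 ≤ u) ↦ ?_)
    calc ‖mlRelaxation lam c u - 1‖ ≤ C * u ^ d := hC u (one_pos.trans_le hu)
      _ ≤ |C| * u ^ e := by
        gcongr
        · exact le_abs_self C
      _ = |C| * ‖u ^ e‖ := by rw [Real.norm_of_nonneg (by positivity)]
  simpa only [sub_add_cancel] using hsub.add hone

end Growth

section Divergence

theorem integrableAtFilter_atTop_of_comp_rpow_neg {E : Type*} [NormedAddCommGroup E]
    [NormedSpace ℝ E] {f : ℝ → E} {k N : ℝ} (hk : 0 < k)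
    (h : IntegrableAtFilter (fun t ↦ t ^ N • f (t ^ (-k))) (𝓝[>] 0)) :
    IntegrableAtFilter (fun u ↦ u ^ (-(N + 1) / k - 1) • f u) atTop := by
  obtain ⟨S, hS, hint⟩ := h
  obtain ⟨a, ha, haS⟩ := mem_nhdsGT_iff_exists_Ioo_subset.1 hS
  have ha_pos : 0 < a := ha
  have hderiv : ∀ t ∈ Ioo 0 a,
      HasDerivWithinAt (fun t ↦ t ^ (-k)) (-k * t ^ (-k - 1)) (Ioo 0 a) t := fun t ht ↦
    (Real.hasDerivAt_rpow_const (Or.inl ht.1.ne')).hasDerivWithinAt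
  have hinj : InjOn (fun t : ℝ ↦ t ^ (-k)) (Ioo 0 a) :=
    (Real.rpow_left_injOn (neg_ne_zero.2 hk.ne')).mono fun t ht ↦ ht.1.le
  have himage : Ioi (a ^ (-k)) ⊆ (fun t ↦ t ^ (-k)) '' Ioo 0 a := by
    intro u hu
    have hu_pos : 0 < u := lt_trans (by positivity) hu
    refine ⟨u ^ (-k)⁻¹, ⟨by positivity, ?_⟩, Real.rpow_inv_rpow hu_pos.le (by linarith)⟩
    exact (Real.rpow_inv_lt_iff_of_neg hu_pos ha_pos (neg_neg_of_pos hk)).2 hu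
  refine ⟨Ioi (a ^ (-k)), Ioi_mem_atTop _, IntegrableOn.mono_set ?_ himage⟩
  rw [integrableOn_image_iff_integrableOn_abs_deriv_smul measurableSet_Ioo hderiv hinj]
  refine IntegrableOn.congr_fun ((hint.mono_set haS).smul k) (fun t ht ↦ ?_) measurableSet_Ioo
  have ht_pos : 0 < t := ht.1
  have hexp : -k - 1 + -k * (-(N + 1) / k - 1) = N := by
    field_simp
    ring
  rw [abs_mul, abs_neg, abs_of_pos hk, abs_of_pos (by positivity), ← Real.rpow_mul ht_pos.le,
    smul_smul, mul_assoc, ← Real.rpow_add ht_pos, hexp, Pi.smul_apply, smul_smul]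

theorem laplaceConvergent_of_integrableAtFilter_rpow_smul {E : Type*} [NormedAddCommGroup E]
    [NormedSpace ℂ E] {f : ℝ → E} {M : ℝ} {s : ℂ} (hf : Continuous f)
    (h : IntegrableAtFilter (fun u ↦ u ^ M • f u) atTop) (hs : 0 < s.re) :
    LaplaceConvergent f s := by
  have hcont : Continuous (laplaceKernel f s) := by
    unfold laplaceKernel
    fun_prop
  have hexp : (fun u : ℝ ↦ cexp (-(s * u))) =O[atTop] fun u : ℝ ↦ u ^ M := by
    refine IsBigO.of_norm_left ?_
    simpa [Complex.norm_exp] using (isLittleO_exp_neg_mul_rpow_atTop hs M).isBigO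
  exact ((hcont.locallyIntegrable.locallyIntegrableOn _).integrableOn_of_isBigO_atTop
    (hexp.smul (isBigO_refl f _)) h).mono_set Ioi_subset_Ici_self

end Divergence

section BetaFactor

theorem exists_pow_isBigO_of_analyticAt {𝕜 E : Type*} [NontriviallyNormedField 𝕜]
    [NormedAddCommGroup E] [NormedSpace 𝕜 E] {f : 𝕜 → E} {z₀ : 𝕜} (hf : AnalyticAt 𝕜 f z₀)
    (hne : ¬∀ᶠ z in 𝓝 z₀, f z = 0) : ∃ k : ℕ, (fun z ↦ (z - z₀) ^ k) =O[𝓝 z₀] f := by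
  obtain ⟨k, g, hg, hg_ne, hfg⟩ := hf.exists_eventuallyEq_pow_smul_nonzero_iff.2 hne
  refine ⟨k, IsBigO.congr' (f₁ := fun z ↦ (z - z₀) ^ k • (1 : 𝕜))
    (g₁ := fun z ↦ (z - z₀) ^ k • g z) ?_ (.of_forall fun z ↦ by simp)
    (hfg.mono fun z hz ↦ hz.symm)⟩
  have hone : (fun _ : 𝕜 ↦ (1 : 𝕜)) =O[𝓝 z₀] g :=
    (isBigO_const_const (1 : 𝕜) hg_ne _).trans
      ((isEquivalent_const_iff_tendsto hg_ne).2 hg.continuousAt).isBigO_symm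
  exact (isBigO_refl _ _).smul hone

/-- One of the two mirror-image factors `z ^ (η - 1) E_λ(-p / z^σ)` of the integrand of `extBeta`,
to be taken at `z = t` and at `z = 1 - t`. -/
noncomputable def betaFactor (lam sig : ℝ) (p e z : ℂ) : ℂ :=
  z ^ (e - 1) * mlE lam (-p / z ^ (sig : ℂ))

variable {lam sig : ℝ} {p e z : ℂ} {t : ℝ}

theorem betaFactor_add_one (lam sig : ℝ) (p e : ℂ) (hz : z ≠ 0) :
    betaFactor lam sig p (e + 1) z = z * betaFactor lam sig p e z := by
  have hpow : z ^ (e + 1 - 1) = z * z ^ (e - 1) := by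
    rw [add_sub_right_comm, cpow_add _ _ hz, cpow_one, mul_comm]
  rw [betaFactor, hpow, mul_assoc, betaFactor]

theorem norm_betaFactor_ofReal (hlam : lam ≠ 0) (sig : ℝ) (p e : ℂ) (ht : 0 < t) :
    ‖betaFactor lam sig p e t‖ =
      t ^ (e.re - 1) * ‖mlRelaxation lam (-p) (t ^ (-(sig / lam)))‖ := by
  have harg : -p / (t : ℂ) ^ (sig : ℂ) = -p * ((t ^ (-(sig / lam))) ^ lam : ℝ) := by
    rw [← Real.rpow_mul ht.le, neg_mul (sig / lam), div_mul_cancel₀ _ hlam, Real.rpow_neg ht.le,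
      ofReal_inv, ofReal_cpow ht.le, div_eq_mul_inv]
  rw [betaFactor, norm_mul, norm_cpow_eq_rpow_re_of_pos ht, harg, mlRelaxation, sub_re, one_re]

theorem measurable_betaFactor (hlam : 0 < lam) (sig : ℝ) (p e : ℂ) :
    Measurable (betaFactor lam sig p e) := by
  have := (differentiable_mlE hlam).continuous.measurable
  unfold betaFactor
  fun_prop

theorem betaFactor_isBigO_rpow (hlam : 0 < lam) (hsig : 0 < sig)
    (h : ∀ s : ℂ, 0 < s.re → LaplaceConvergent (mlRelaxation lam (-p)) s) {d : ℝ}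
    (hd : d < e.re) :
    (fun t : ℝ ↦ betaFactor lam sig p e t) =O[𝓟 (Ioo 0 1)] fun t ↦ t ^ (d - 1) := by
  have hmaps : Tendsto (fun t : ℝ ↦ t ^ (-(sig / lam))) (𝓟 (Ioo 0 1)) (𝓟 (Ici 1)) :=
    tendsto_principal_principal.2 fun t ht ↦
      Real.one_le_rpow_of_pos_of_le_one_of_nonpos ht.1 ht.2.le (neg_nonpos.2 (by positivity))
  have hgrowth := (mlRelaxation_isBigO_rpow hlam h (e := (e.re - d) * lam / sig)
    (by have := sub_pos.2 hd; positivity)).comp_tendsto hmaps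
  refine ((isBigO_refl (fun t : ℝ ↦ t ^ (e.re - 1)) _).mul hgrowth.norm_left).congr' ?_ ?_
    |>.of_norm_left
  · exact eventuallyEq_principal.2 fun t ht ↦ (norm_betaFactor_ofReal hlam.ne' sig p e ht.1).symm
  · refine eventuallyEq_principal.2 fun t ht ↦ ?_
    have hexp : e.re - 1 + -(sig / lam) * ((e.re - d) * lam / sig) = d - 1 := by
      field_simp
      ring
    simp only [Function.comp_apply]
    rw [← Real.rpow_mul ht.1.le, ← Real.rpow_add ht.1, hexp]

theorem analyticOnNhd_betaFactor (hlam : 0 < lam) (sig : ℝ) (p e : ℂ) :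
    AnalyticOnNhd ℂ (betaFactor lam sig p e) slitPlane := by
  refine DifferentiableOn.analyticOnNhd (fun z hz ↦ ?_) isOpen_slitPlane
  have hpow (a : ℂ) : DifferentiableAt ℂ (fun z : ℂ ↦ z ^ a) z :=
    differentiableAt_id.cpow_const hz
  have hne : z ^ (sig : ℂ) ≠ 0 := by simp [cpow_eq_zero_iff, slitPlane_ne_zero hz]
  exact ((hpow _).mul ((differentiable_mlE hlam _).comp z
    ((differentiableAt_const _).div (hpow _) hne))).differentiableWithinAt

theorem not_eventually_betaFactor_eq_zero (hlam : 0 < lam) (hsig : 0 < sig) (p e : ℂ) :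
    ¬∀ᶠ z in 𝓝 1, betaFactor lam sig p e z = 0 := by
  intro hzero
  have hslit : EqOn (betaFactor lam sig p e) 0 slitPlane :=
    (analyticOnNhd_betaFactor hlam sig p e).eqOn_zero_of_preconnected_of_eventuallyEq_zero
      (starConvex_one_slitPlane.isPathConnected one_mem_slitPlane).isConnected.isPreconnected
      one_mem_slitPlane hzero
  have harg : Tendsto (fun x : ℝ ↦ -p / (x : ℂ) ^ (sig : ℂ)) atTop (𝓝 0) := by
    have hcpow : Tendsto (fun x : ℝ ↦ (x : ℂ) ^ (sig : ℂ)) atTop (Bornology.cobounded ℂ) := by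
      rw [← tendsto_norm_atTop_iff_cobounded]
      refine (tendsto_rpow_atTop hsig).congr' ?_
      filter_upwards [eventually_ge_atTop 0] with x hx
      rw [norm_cpow_real, norm_real, Real.norm_of_nonneg hx]
    simpa [div_eq_mul_inv] using (tendsto_inv₀_cobounded.comp hcpow).const_mul (-p)
  have hone : Tendsto (fun x : ℝ ↦ mlE lam (-p / (x : ℂ) ^ (sig : ℂ))) atTop (𝓝 1) := by
    simpa only [mlE_zero, Function.comp_def] using
      ((differentiable_mlE hlam).continuous.tendsto 0).comp harg
  obtain ⟨x, hx_ne, hx⟩ := ((hone.eventually_ne one_ne_zero).and (eventually_gt_atTop 0)).exists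
  have hpow_ne : (x : ℂ) ^ (e - 1) ≠ 0 := by simp [cpow_eq_zero_iff, hx.ne']
  exact mul_ne_zero hpow_ne hx_ne (hslit (ofReal_mem_slitPlane.2 hx))

theorem exists_pow_isBigO_betaFactor_one_sub (hlam : 0 < lam) (hsig : 0 < sig) (p e : ℂ) :
    ∃ k : ℕ, (fun t : ℝ ↦ t ^ k) =O[𝓝 0] fun t : ℝ ↦ betaFactor lam sig p e (1 - t) := by
  obtain ⟨k, hk⟩ := exists_pow_isBigO_of_analyticAt
    (analyticOnNhd_betaFactor hlam sig p e 1 one_mem_slitPlane)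
    (not_eventually_betaFactor_eq_zero hlam hsig p e)
  have hone : Tendsto (fun t : ℝ ↦ (1 - t : ℂ)) (𝓝 0) (𝓝 1) :=
    (continuous_const.sub continuous_ofReal).tendsto' _ _ (by simp)
  exact ⟨k, IsBigO.trans (isBigO_of_le _ fun t ↦ by simp) (hk.comp_tendsto hone)⟩

end BetaFactor

section ExtBeta

variable {lam sig tau : ℝ} {p q e1 e2 : ℂ} {t : ℝ}

/-- The integrand of `extBeta`, as a product of two instances of `betaFactor`. -/
noncomputable def extBetaIntegrand (lam sig tau : ℝ) (p q e1 e2 : ℂ) (t : ℝ) : ℂ :=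
  betaFactor lam sig p e1 t * betaFactor lam tau q e2 (1 - t)

theorem extBeta_eq_integral_extBetaIntegrand (lam sig tau : ℝ) (p q e1 e2 : ℂ) :
    extBeta lam sig tau p q e1 e2 = ∫ t in Ioo 0 1, extBetaIntegrand lam sig tau p q e1 e2 t := by
  simp only [extBeta, extBetaIntegrand, betaFactor]
  congr with t
  ring

theorem extBetaIntegrand_one_sub (lam sig tau : ℝ) (p q e1 e2 : ℂ) (t : ℝ) :
    extBetaIntegrand lam sig tau p q e1 e2 (1 - t) =
      extBetaIntegrand lam tau sig q p e2 e1 t := by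
  simp [extBetaIntegrand, mul_comm]

theorem extBetaIntegrand_add (lam sig tau : ℝ) (p q e1 e2 : ℂ) (ht : t ∈ Ioo 0 1) :
    extBetaIntegrand lam sig tau p q (e1 + 1) e2 t +
      extBetaIntegrand lam sig tau p q e1 (e2 + 1) t =
        extBetaIntegrand lam sig tau p q e1 e2 t := by
  have ht_ne : (t : ℂ) ≠ 0 := ofReal_ne_zero.2 ht.1.ne'
  have ht_sub_ne : (1 - t : ℂ) ≠ 0 := sub_ne_zero.2 (by exact_mod_cast ht.2.ne')
  simp only [extBetaIntegrand, betaFactor_add_one _ _ _ _ ht_ne,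
    betaFactor_add_one _ _ _ _ ht_sub_ne]
  ring

theorem measurable_extBetaIntegrand (hlam : 0 < lam) (sig tau : ℝ) (p q e1 e2 : ℂ) :
    Measurable (extBetaIntegrand lam sig tau p q e1 e2) :=
  ((measurable_betaFactor hlam sig p e1).comp measurable_ofReal).mul
    ((measurable_betaFactor hlam tau q e2).comp (measurable_const.sub measurable_ofReal))

theorem integrableOn_rpow_mul_one_sub_rpow {a b : ℝ} (ha : 0 < a) (hb : 0 < b) :
    IntegrableOn (fun t : ℝ ↦ t ^ (a - 1) * (1 - t) ^ (b - 1)) (Ioo 0 1) := by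
  have hbeta := Complex.betaIntegral_convergent (u := a) (v := b) (by simpa) (by simpa)
  rw [intervalIntegrable_iff_integrableOn_Ioo_of_le zero_le_one] at hbeta
  refine IntegrableOn.congr_fun (Integrable.norm hbeta) (fun t ht ↦ ?_) measurableSet_Ioo
  have ht_sub : (1 - t : ℂ) = (1 - t : ℝ) := by norm_cast
  rw [ht_sub, norm_mul, norm_cpow_eq_rpow_re_of_pos ht.1,
    norm_cpow_eq_rpow_re_of_pos (sub_pos.2 ht.2)]
  simp

theorem integrableOn_extBetaIntegrand (hlam : 0 < lam) (hsig : 0 < sig) (htau : 0 < tau)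
    (he1 : 0 < e1.re) (he2 : 0 < e2.re)
    (hp : ∀ s : ℂ, 0 < s.re → LaplaceConvergent (mlRelaxation lam (-p)) s)
    (hq : ∀ s : ℂ, 0 < s.re → LaplaceConvergent (mlRelaxation lam (-q)) s) :
    IntegrableOn (extBetaIntegrand lam sig tau p q e1 e2) (Ioo 0 1) := by
  have hfst := betaFactor_isBigO_rpow hlam hsig hp (half_lt_self he1)
  have hreflect : Tendsto (fun t : ℝ ↦ 1 - t) (𝓟 (Ioo 0 1)) (𝓟 (Ioo 0 1)) :=
    tendsto_principal_principal.2 fun t ht ↦ ⟨sub_pos.2 ht.2, sub_lt_self 1 ht.1⟩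
  have hsnd := (betaFactor_isBigO_rpow hlam htau hq (half_lt_self he2)).comp_tendsto hreflect
  obtain ⟨C, hC⟩ := (hfst.mul hsnd).bound
  refine Integrable.mono' ((integrableOn_rpow_mul_one_sub_rpow (half_pos he1)
    (half_pos he2)).norm.const_mul C)
    (measurable_extBetaIntegrand hlam sig tau p q e1 e2).aestronglyMeasurable ?_
  filter_upwards [ae_restrict_mem measurableSet_Ioo] with t ht
  simpa [extBetaIntegrand] using eventually_principal.1 hC t ht

theorem laplaceConvergent_fst_of_integrableOn_extBetaIntegrand (hlam : 0 < lam) (hsig : 0 < sig)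
    (htau : 0 < tau) (h : IntegrableOn (extBetaIntegrand lam sig tau p q e1 e2) (Ioo 0 1))
    {s : ℂ} (hs : 0 < s.re) : LaplaceConvergent (mlRelaxation lam (-p)) s := by
  obtain ⟨k, hk⟩ := exists_pow_isBigO_betaFactor_one_sub hlam htau q e2
  set N := e1.re - 1 + k
  refine laplaceConvergent_of_integrableAtFilter_rpow_smul (continuous_mlRelaxation hlam (-p))
    (integrableAtFilter_atTop_of_comp_rpow_neg (N := N) (div_pos hsig hlam) ?_) hs
  have hbig : (fun t : ℝ ↦ t ^ N • mlRelaxation lam (-p) (t ^ (-(sig / lam)))) =O[𝓝[>] 0]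
      extBetaIntegrand lam sig tau p q e1 e2 := by
    have hfst : (fun t : ℝ ↦ t ^ (e1.re - 1) • mlRelaxation lam (-p) (t ^ (-(sig / lam))))
        =O[𝓝[>] 0] fun t : ℝ ↦ betaFactor lam sig p e1 t := by
      refine .of_bound 1 ?_
      filter_upwards [self_mem_nhdsWithin] with t (ht : 0 < t)
      rw [one_mul, norm_betaFactor_ofReal hlam.ne' sig p e1 ht, norm_smul,
        Real.norm_of_nonneg (by positivity)]
    refine ((hk.mono nhdsWithin_le_nhds).smul hfst).congr' ?_ ?_
    · filter_upwards [self_mem_nhdsWithin] with t (ht : 0 < t)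
      rw [smul_smul, ← Real.rpow_natCast, ← Real.rpow_add ht, add_comm]
    · exact .of_forall fun t ↦ mul_comm _ _
  have hmeas : Measurable fun t : ℝ ↦ t ^ N • mlRelaxation lam (-p) (t ^ (-(sig / lam))) := by
    have := (continuous_mlRelaxation hlam (-p)).measurable
    fun_prop
  exact hbig.integrableAtFilter hmeas.aestronglyMeasurable.stronglyMeasurableAtFilter
    ⟨Ioo 0 1, Ioo_mem_nhdsGT one_pos, h⟩

theorem integrableOn_extBetaIntegrand_comm :
    IntegrableOn (extBetaIntegrand lam sig tau p q e1 e2) (Ioo 0 1) ↔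
      IntegrableOn (extBetaIntegrand lam tau sig q p e2 e1) (Ioo 0 1) := by
  have hpre : (fun t : ℝ ↦ 1 - t) ⁻¹' Ioo 0 1 = Ioo 0 1 := by simp
  rw [← (Measure.measurePreserving_sub_left volume (1 : ℝ)).integrableOn_comp_preimage
    (MeasurableEquiv.subLeft (1 : ℝ)).measurableEmbedding, hpre]
  exact integrableOn_congr_fun (fun t _ ↦ extBetaIntegrand_one_sub lam sig tau p q e1 e2 t)
    measurableSet_Ioo

/-- The right-hand side does not involve `e1` and `e2`: the integrals at `(e1, e2)`,
`(e1 + 1, e2)` and `(e1, e2 + 1)` converge or diverge together. -/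
theorem integrableOn_extBetaIntegrand_iff (hlam : 0 < lam) (hsig : 0 < sig) (htau : 0 < tau)
    (he1 : 0 < e1.re) (he2 : 0 < e2.re) :
    IntegrableOn (extBetaIntegrand lam sig tau p q e1 e2) (Ioo 0 1) ↔
      (∀ s : ℂ, 0 < s.re → LaplaceConvergent (mlRelaxation lam (-p)) s) ∧
        ∀ s : ℂ, 0 < s.re → LaplaceConvergent (mlRelaxation lam (-q)) s := by
  refine ⟨fun h ↦ ⟨fun s hs ↦ ?_, fun s hs ↦ ?_⟩, fun ⟨hp, hq⟩ ↦
    integrableOn_extBetaIntegrand hlam hsig htau he1 he2 hp hq⟩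
  · exact laplaceConvergent_fst_of_integrableOn_extBetaIntegrand hlam hsig htau h hs
  · exact laplaceConvergent_fst_of_integrableOn_extBetaIntegrand hlam htau hsig
      (integrableOn_extBetaIntegrand_comm.1 h) hs

end ExtBeta

theorem extBeta_functional_relation_general (lam sig tau : ℝ) (hlam : 0 < lam) (hsig : 0 < sig)
    (htau : 0 < tau) (p q e1 e2 : ℂ) (he1 : 0 < e1.re) (he2 : 0 < e2.re) :
    extBeta lam sig tau p q (e1 + 1) e2 + extBeta lam sig tau p q e1 (e2 + 1)
      = extBeta lam sig tau p q e1 e2 := by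
  have he1' : 0 < (e1 + 1).re := by
    rw [add_re, one_re]
    positivity
  have he2' : 0 < (e2 + 1).re := by
    rw [add_re, one_re]
    positivity
  simp only [extBeta_eq_integral_extBetaIntegrand]
  by_cases hint : IntegrableOn (extBetaIntegrand lam sig tau p q e1 e2) (Ioo 0 1)
  · have hconv := (integrableOn_extBetaIntegrand_iff hlam hsig htau he1 he2).1 hint
    rw [← integral_add ((integrableOn_extBetaIntegrand_iff hlam hsig htau he1' he2).2 hconv)
      ((integrableOn_extBetaIntegrand_iff hlam hsig htau he1 he2').2 hconv)]
    exact setIntegral_congr_fun measurableSet_Ioo fun t ht ↦ extBetaIntegrand_add _ _ _ _ _ _ _ ht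
  · have hdiv := mt (integrableOn_extBetaIntegrand_iff hlam hsig htau he1 he2).2 hint
    rw [integral_undef hint,
      integral_undef (mt (integrableOn_extBetaIntegrand_iff hlam hsig htau he1' he2).1 hdiv),
      integral_undef (mt (integrableOn_extBetaIntegrand_iff hlam hsig htau he1 he2').1 hdiv),
      add_zero]

theorem extBeta_functional_relation (lam sig tau : ℝ) (hlam : 0 < lam) (hsig : 0 < sig)
    (htau : 0 < tau) (p q e1 e2 : ℂ) (hp : 0 ≤ p.re) (hq : 0 ≤ q.re)
    (he1 : 0 < e1.re) (he2 : 0 < e2.re) :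
    extBeta lam sig tau p q (e1 + 1) e2 + extBeta lam sig tau p q e1 (e2 + 1)
      = extBeta lam sig tau p q e1 e2 :=
  extBeta_functional_relation_general lam sig tau hlam hsig htau p q e1 e2 he1 he2
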